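/- Fix real P_t > 0 and c' > 0. Let (g_{i,j})_{i,j≥1} be a doubly-indexed i.i.d. array of standard complex Gaussian random variables, for each L ≥ 1 set Q_L = ⌈c'L⌉, and let h_1,…,h_{Q_L} ∈ ℂ^L be the rows of the Q_L×L matrix (g_{i,j})_{1≤i≤Q_L,1≤j≤L}. Fix k and define X_L = (P_t/(Q_L·L))·‖h_k‖⁴ and Y_L = 1 + (P_t/(Q_L·L))·Σ_{ϑ≠k, 1≤ϑ≤Q_L} |h_k^T h_ϑ^*|². Then lim_{L→∞} E[ln(1 + X_L/Y_L)] = ln(1 + (1/c')·P_t/(P_t + 1)); equivalently, the average sum-rate R̄^{MF}(1, c'L) = c'·L·E[ln(1 + X_L/Y_L)] of the cacheless MF-based MISO broadcast channel with c'L streams satisfies R̄^{MF}(1, c'L)/(c'·L) → ln(1 + (1/c')·P_t/(P_t + 1)) as L → ∞. -/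

import Mathlib

open MeasureTheory ProbabilityTheory
open scoped NNReal

/-- A family `g i` of complex random variables is i.i.d. standard complex Gaussian if the
real and imaginary parts of all its members form a jointly independent family of real
random variables, each distributed as `gaussianReal 0 (1/2)`. -/
def IsStdComplexGaussianFamily {Ω ι : Type*} [MeasurableSpace Ω] (P : Measure Ω)
    (g : ι → Ω → ℂ) : Prop :=
  iIndepFun (m := fun _ : ι × Bool => (inferInstance : MeasurableSpace ℝ))
      (fun p ω => if p.2 then (g p.1 ω).re else (g p.1 ω).im) P ∧
  ∀ p : ι × Bool,
    Measure.map (fun ω => if p.2 then (g p.1 ω).re else (g p.1 ω).im) P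
      = gaussianReal 0 (1 / 2 : ℝ≥0)

/-! Conditionally on `h_k`, each `h_kᵀ h_ϑ*` is a complex Gaussian of variance `‖h_k‖²`, and these
are independent in `ϑ`. Hence the interference `∑_ϑ |h_kᵀ h_ϑ*|²` has conditional mean
`(Q_L - 1) ‖h_k‖²` and, by Bienaymé, conditional standard deviation at most a constant times
`√Q_L ‖h_k‖²`, which is negligible at the scale `Q_L L`. The law of large numbers in `L²` for
`‖h_k‖² / L` then gives `X_L → P_t / c'` and `Y_L → 1 + P_t` in `L¹`. Expectations of
`log (1 + X_L / Y_L)` converge because `(x, y) ↦ log (1 + x / y)` is Lipschitz on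
`x ≥ 0`, `y ≥ 1`. -/

open Filter Topology ENNReal ComplexConjugate

lemma abs_log_sub_log_le {x y : ℝ} (hx : 1 ≤ x) (hy : 1 ≤ y) :
    |Real.log x - Real.log y| ≤ |x - y| := by
  wlog hxy : y ≤ x generalizing x y
  · rw [abs_sub_comm, abs_sub_comm x]
    exact this hy hx (le_of_not_ge hxy)
  have hy0 : 0 < y := by linarith
  rw [abs_of_nonneg (sub_nonneg.2 (Real.log_le_log hy0 hxy)), abs_of_nonneg (sub_nonneg.2 hxy)]
  calc Real.log x - Real.log y = Real.log (x / y) := (Real.log_div (by positivity) hy0.ne').symm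
    _ ≤ x / y - 1 := Real.log_le_sub_one_of_pos (by positivity)
    _ = (x - y) / y := by field_simp
    _ ≤ x - y := div_le_self (sub_nonneg.2 hxy) hy

lemma abs_log_one_add_div_sub_le {x y a b : ℝ} (hx : 0 ≤ x) (hy : 1 ≤ y) (ha : 0 ≤ a)
    (hb : 1 ≤ b) :
    |Real.log (1 + x / y) - Real.log (1 + a / b)| ≤ |x - a| + 2 * |y - b| := by
  have log_one_add_div {u v : ℝ} (hu : 0 ≤ u) (hv : 1 ≤ v) :
      Real.log (1 + u / v) = Real.log (v + u) - Real.log v := by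
    rw [one_add_div (by positivity), Real.log_div (by positivity) (by positivity)]
  rw [log_one_add_div hx hy, log_one_add_div ha hb, sub_sub_sub_comm]
  calc |Real.log (y + x) - Real.log (b + a) - (Real.log y - Real.log b)|
      ≤ |Real.log (y + x) - Real.log (b + a)| + |Real.log y - Real.log b| := abs_sub _ _
    _ ≤ |y + x - (b + a)| + |y - b| :=
        add_le_add (abs_log_sub_log_le (by linarith) (by linarith)) (abs_log_sub_log_le hy hb)
    _ ≤ |y - b| + |x - a| + |y - b| := by
        rw [add_sub_add_comm]
        gcongr
        exact abs_add_le _ _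
    _ = |x - a| + 2 * |y - b| := by ring

section ConvergenceInLp

variable {Ω ι : Type*} [MeasurableSpace Ω] {P : Measure Ω}

lemma eLpNorm_const_mul_mono {p : ℝ≥0∞} {f g : Ω → ℝ} (hfg : eLpNorm f p P ≤ eLpNorm g p P)
    (c : ℝ) : eLpNorm (fun ω ↦ c * f ω) p P ≤ eLpNorm (fun ω ↦ c * g ω) p P := by
  have eLpNorm_const_mul (u : Ω → ℝ) : eLpNorm (fun ω ↦ c * u ω) p P = ‖c‖ₑ * eLpNorm u p P :=
    eLpNorm_const_smul c u p P
  grw [eLpNorm_const_mul, eLpNorm_const_mul, hfg]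

/-- Convergence in `Lᵖ` of a family of real random variables to a constant; every member of the
family, not only the tail, is required to be in `Lᵖ`. -/
structure TendstoInLp (P : Measure Ω) (p : ℝ≥0∞) (X : ι → Ω → ℝ) (l : Filter ι) (x : ℝ) :
    Prop where
  memLp (i : ι) : MemLp (X i) p P
  tendsto_eLpNorm : Tendsto (fun i ↦ eLpNorm (fun ω ↦ X i ω - x) p P) l (𝓝 0)

namespace TendstoInLp

variable {p : ℝ≥0∞} {X Y : ι → Ω → ℝ} {l : Filter ι} {x y : ℝ}

lemma of_eLpNorm_le {Z : ι → Ω → ℝ} (hX : TendstoInLp P p X l 0)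
    (hZ : ∀ i, AEStronglyMeasurable (Z i) P)
    (hle : ∀ i, eLpNorm (Z i) p P ≤ eLpNorm (X i) p P) : TendstoInLp P p Z l 0 where
  memLp i := ⟨hZ i, (hle i).trans_lt (hX.memLp i).2⟩
  tendsto_eLpNorm := by
    have hX' := hX.tendsto_eLpNorm
    simp only [sub_zero] at hX' ⊢
    exact tendsto_of_tendsto_of_tendsto_of_le_of_le tendsto_const_nhds hX' (fun _ ↦ zero_le) hle

lemma mono_exponent [IsProbabilityMeasure P] {q : ℝ≥0∞} (hX : TendstoInLp P p X l x)
    (hqp : q ≤ p) : TendstoInLp P q X l x where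
  memLp i := (hX.memLp i).mono_exponent hqp
  tendsto_eLpNorm := tendsto_of_tendsto_of_tendsto_of_le_of_le tendsto_const_nhds
    hX.tendsto_eLpNorm (fun _ ↦ zero_le) fun i ↦
      eLpNorm_le_eLpNorm_of_exponent_le hqp
        ((hX.memLp i).aestronglyMeasurable.sub aestronglyMeasurable_const)

lemma tendsto_integral [IsProbabilityMeasure P] (hX : TendstoInLp P 1 X l x) :
    Tendsto (fun i ↦ ∫ ω, X i ω ∂P) l (𝓝 x) := by
  simpa using tendsto_integral_of_L1' (fun _ ↦ x) aestronglyMeasurable_const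
    (Eventually.of_forall fun i ↦ memLp_one_iff_integrable.1 (hX.memLp i)) hX.tendsto_eLpNorm

lemma of_abs_sub_le [IsFiniteMeasure P] (hp : 1 ≤ p) {Z : ι → Ω → ℝ} {z C D : ℝ}
    (hX : TendstoInLp P p X l x) (hY : TendstoInLp P p Y l y)
    (hZ : ∀ i, AEStronglyMeasurable (Z i) P)
    (hle : ∀ i ω, |Z i ω - z| ≤ C * |X i ω - x| + D * |Y i ω - y|) : TendstoInLp P p Z l z := by
  have hC i : MemLp (C • fun ω ↦ |X i ω - x|) p P :=
    ((hX.memLp i).sub (memLp_const x)).abs.const_smul C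
  have hD i : MemLp (D • fun ω ↦ |Y i ω - y|) p P :=
    ((hY.memLp i).sub (memLp_const y)).abs.const_smul D
  have norm_le i ω : ‖Z i ω - z‖ ≤
      ((C • fun ω ↦ |X i ω - x|) + (D • fun ω ↦ |Y i ω - y|)) ω := hle i ω
  constructor
  · intro i
    have hZz : MemLp (fun ω ↦ Z i ω - z) p P :=
      .of_le ((hC i).add (hD i)) ((hZ i).sub aestronglyMeasurable_const)
        (ae_of_all _ fun ω ↦ (norm_le i ω).trans (le_abs_self _))
    simpa [Pi.add_def] using hZz.add (memLp_const z)
  have eLpNorm_le i : eLpNorm (fun ω ↦ Z i ω - z) p P ≤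
      ‖C‖ₑ * eLpNorm (fun ω ↦ X i ω - x) p P + ‖D‖ₑ * eLpNorm (fun ω ↦ Y i ω - y) p P := by
    rw [← eLpNorm_norm fun ω ↦ X i ω - x, ← eLpNorm_norm fun ω ↦ Y i ω - y,
      ← eLpNorm_const_smul, ← eLpNorm_const_smul]
    exact (eLpNorm_mono_ae_real (ae_of_all _ (norm_le i))).trans
      (eLpNorm_add_le (hC i).1 (hD i).1 hp)
  refine tendsto_of_tendsto_of_tendsto_of_le_of_le tendsto_const_nhds ?_ (fun _ ↦ zero_le)
    eLpNorm_le
  simpa using (ENNReal.Tendsto.const_mul hX.tendsto_eLpNorm (.inr enorm_ne_top)).add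
    (ENNReal.Tendsto.const_mul hY.tendsto_eLpNorm (.inr enorm_ne_top))

lemma add [IsFiniteMeasure P] (hp : 1 ≤ p) (hX : TendstoInLp P p X l x)
    (hY : TendstoInLp P p Y l y) : TendstoInLp P p (fun i ω ↦ X i ω + Y i ω) l (x + y) :=
  of_abs_sub_le hp hX hY (C := 1) (D := 1) (fun i ↦ ((hX.memLp i).add (hY.memLp i)).1)
    fun i ω ↦ by simpa [add_sub_add_comm] using abs_add_le _ _

lemma of_tendsto [IsFiniteMeasure P] {a : ι → ℝ} {a₀ : ℝ} (ha : Tendsto a l (𝓝 a₀)) :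
    TendstoInLp P p (fun i _ ↦ a i) l a₀ where
  memLp i := memLp_const (a i)
  tendsto_eLpNorm := by
    have ha' : Tendsto (fun i ↦ ‖a i - a₀‖ₑ) l (𝓝 0) := by
      simpa using (ha.sub_const a₀).enorm
    have eLpNorm_eq i : eLpNorm (fun _ ↦ a i - a₀) p P =
        ‖a i - a₀‖ₑ * eLpNorm (fun _ ↦ (1 : ℝ)) p P := by
      simpa [Pi.smul_def] using eLpNorm_const_smul (a i - a₀) (fun _ ↦ (1 : ℝ)) p P
    simpa [eLpNorm_eq] using
      ENNReal.Tendsto.mul_const ha' (.inr (memLp_const (1 : ℝ)).eLpNorm_ne_top)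

lemma mul [IsFiniteMeasure P] {q r : ℝ≥0∞} [HolderTriple p q r] (hr : 1 ≤ r)
    (hX : TendstoInLp P p X l x) (hY : TendstoInLp P q Y l y) :
    TendstoInLp P r (fun i ω ↦ X i ω * Y i ω) l (x * y) where
  memLp i := (hY.memLp i).mul' (hX.memLp i)
  tendsto_eLpNorm := by
    have hx : MemLp (fun _ : Ω ↦ x) p P := memLp_const x
    have hy : MemLp (fun _ : Ω ↦ y) q P := memLp_const y
    have hXx i : MemLp (fun ω ↦ X i ω - x) p P := (hX.memLp i).sub hx
    have hYy i : MemLp (fun ω ↦ Y i ω - y) q P := (hY.memLp i).sub hy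
    have eLpNorm_Y_le i : eLpNorm (Y i) q P ≤
        eLpNorm (fun ω ↦ Y i ω - y) q P + eLpNorm (fun _ : Ω ↦ y) q P := by
      simpa [Pi.add_def] using
        eLpNorm_add_le (hYy i).1 hy.1 (hr.trans (HolderTriple.le q p r))
    have eLpNorm_le i : eLpNorm (fun ω ↦ X i ω * Y i ω - x * y) r P ≤
        eLpNorm (fun ω ↦ X i ω - x) p P *
            (eLpNorm (fun ω ↦ Y i ω - y) q P + eLpNorm (fun _ : Ω ↦ y) q P) +
          eLpNorm (fun _ : Ω ↦ x) p P * eLpNorm (fun ω ↦ Y i ω - y) q P := by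
      have mul_sub_mul_eq : (fun ω ↦ X i ω * Y i ω - x * y) =
          (fun ω ↦ X i ω - x) • Y i + (fun _ : Ω ↦ x) • (fun ω ↦ Y i ω - y) := by
        ext ω
        change _ = (X i ω - x) * Y i ω + x * (Y i ω - y)
        ring
      rw [mul_sub_mul_eq]
      refine (eLpNorm_add_le ((hXx i).1.smul (hY.memLp i).1) (hx.1.smul (hYy i).1) hr).trans ?_
      grw [eLpNorm_smul_le_mul_eLpNorm (p := p) (q := q) (hY.memLp i).1 (hXx i).1,
        eLpNorm_smul_le_mul_eLpNorm (p := p) (q := q) (hYy i).1 hx.1, eLpNorm_Y_le i]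
    refine tendsto_of_tendsto_of_tendsto_of_le_of_le tendsto_const_nhds ?_ (fun _ ↦ zero_le)
      eLpNorm_le
    simpa using (ENNReal.Tendsto.mul hX.tendsto_eLpNorm (.inr (by simpa using hy.eLpNorm_ne_top))
      (hY.tendsto_eLpNorm.add_const _) (.inr zero_ne_top)).add
      (ENNReal.Tendsto.const_mul hY.tendsto_eLpNorm (.inr hx.eLpNorm_ne_top))

lemma const_mul [IsFiniteMeasure P] (hp : 1 ≤ p) {a : ι → ℝ} {a₀ : ℝ} (ha : Tendsto a l (𝓝 a₀))
    (hX : TendstoInLp P p X l x) : TendstoInLp P p (fun i ω ↦ a i * X i ω) l (a₀ * x) :=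
  (of_tendsto ha : TendstoInLp P ∞ (fun i _ ↦ a i) l a₀).mul hp hX

lemma log_one_add_div [IsFiniteMeasure P] (hp : 1 ≤ p) (hX : TendstoInLp P p X l x)
    (hY : TendstoInLp P p Y l y) (hX0 : ∀ i ω, 0 ≤ X i ω) (hY1 : ∀ i ω, 1 ≤ Y i ω) (hx : 0 ≤ x)
    (hy : 1 ≤ y) :
    TendstoInLp P p (fun i ω ↦ Real.log (1 + X i ω / Y i ω)) l (Real.log (1 + x / y)) := by
  refine of_abs_sub_le hp hX hY (C := 1) (D := 2) (fun i ↦ ?_) fun i ω ↦ ?_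
  · exact ((((hX.memLp i).1.aemeasurable.div (hY.memLp i).1.aemeasurable).const_add 1).log
      ).aestronglyMeasurable
  · simpa using abs_log_one_add_div_sub_le (hX0 i ω) (hY1 i ω) hx hy

end TendstoInLp

end ConvergenceInLp

section StdComplexGaussian

/-- The standard complex Gaussian law: independent real and imaginary parts, each centred with
variance `1 / 2`. -/
noncomputable def stdComplexGaussian : Measure ℂ :=
  ((gaussianReal 0 (1 / 2)).prod (gaussianReal 0 (1 / 2))).map Complex.measurableEquivRealProd.symm

lemma normSq_sqrt_smul {r : ℝ} (hr : 0 ≤ r) (z : ℂ) :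
    Complex.normSq (√r • z) = r * Complex.normSq z := by
  rw [Complex.real_smul, map_mul, Complex.normSq_ofReal, Real.mul_self_sqrt hr]

lemma sum_normSq_nonneg {κ : Type*} (s : Finset κ) (c : κ → ℂ) :
    0 ≤ ∑ j ∈ s, Complex.normSq (c j) :=
  Finset.sum_nonneg fun j _ ↦ Complex.normSq_nonneg (c j)

instance : IsProbabilityMeasure stdComplexGaussian :=
  Measure.isProbabilityMeasure_map Complex.measurableEquivRealProd.symm.measurable.aemeasurable

lemma map_re_stdComplexGaussian : stdComplexGaussian.map Complex.re = gaussianReal 0 (1 / 2) := by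
  rw [stdComplexGaussian, Measure.map_map Complex.measurable_re (by fun_prop)]
  exact measurePreserving_fst.map_eq

lemma map_im_stdComplexGaussian : stdComplexGaussian.map Complex.im = gaussianReal 0 (1 / 2) := by
  rw [stdComplexGaussian, Measure.map_map Complex.measurable_im (by fun_prop)]
  exact measurePreserving_snd.map_eq

lemma memLp_id_stdComplexGaussian (p : ℝ≥0) : MemLp id p stdComplexGaussian := by
  have hre : MemLp Complex.re p stdComplexGaussian := by
    have h := memLp_id_gaussianReal (μ := 0) (v := 1 / 2) p
    rwa [← map_re_stdComplexGaussian, memLp_map_measure_iff (by fun_prop) (by fun_prop)] at h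
  have him : MemLp Complex.im p stdComplexGaussian := by
    have h := memLp_id_gaussianReal (μ := 0) (v := 1 / 2) p
    rwa [← map_im_stdComplexGaussian, memLp_map_measure_iff (by fun_prop) (by fun_prop)] at h
  exact memLp_re_im_iff.1 ⟨hre, him⟩

lemma memLp_normSq_stdComplexGaussian (p : ℝ≥0) :
    MemLp Complex.normSq p stdComplexGaussian := by
  have h := (memLp_id_stdComplexGaussian (p * 2)).norm_rpow_div 2
  rw [ENNReal.coe_mul, ENNReal.coe_ofNat,
    ENNReal.mul_div_cancel_right two_ne_zero ofNat_ne_top] at h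
  simpa [← Complex.normSq_eq_norm_sq] using h

lemma integral_sq_gaussianReal (v : ℝ≥0) : ∫ x, x ^ 2 ∂gaussianReal 0 v = v := by
  have h := variance_of_integral_eq_zero (X := id) (μ := gaussianReal 0 v) aemeasurable_id (by simp)
  simpa using h.symm

lemma integral_normSq_stdComplexGaussian : ∫ z, Complex.normSq z ∂stdComplexGaussian = 1 := by
  have hre : ∫ z, z.re ^ 2 ∂stdComplexGaussian = 1 / 2 := by
    rw [← integral_map (f := fun x : ℝ ↦ x ^ 2) (by fun_prop) (by fun_prop),
      map_re_stdComplexGaussian, integral_sq_gaussianReal]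
    simp
  have him : ∫ z, z.im ^ 2 ∂stdComplexGaussian = 1 / 2 := by
    rw [← integral_map (f := fun x : ℝ ↦ x ^ 2) (by fun_prop) (by fun_prop),
      map_im_stdComplexGaussian, integral_sq_gaussianReal]
    simp
  have h := memLp_id_stdComplexGaussian 2
  have hre_int : Integrable (fun z : ℂ ↦ z.re ^ 2) stdComplexGaussian := h.re.integrable_sq
  have him_int : Integrable (fun z : ℂ ↦ z.im ^ 2) stdComplexGaussian := h.im.integrable_sq
  simp only [Complex.normSq_apply, ← sq]
  rw [integral_add hre_int him_int, hre, him, add_halves]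

lemma charFun_stdComplexGaussian (t : ℂ) :
    charFun stdComplexGaussian t = Complex.exp (-Complex.normSq t / 4) := by
  have exp_inner (x : ℝ × ℝ) :
      Complex.exp (inner ℝ (Complex.measurableEquivRealProd.symm x) t * Complex.I) =
        Complex.exp (t.re * x.1 * Complex.I) * Complex.exp (t.im * x.2 * Complex.I) := by
    rw [← Complex.exp_add, Complex.inner, Complex.measurableEquivRealProd_symm_apply]
    simp only [Complex.mul_re, Complex.conj_re, Complex.conj_im]
    push_cast
    ring_nf
  calc charFun stdComplexGaussian t
      = ∫ x : ℝ × ℝ, Complex.exp (t.re * x.1 * Complex.I) * Complex.exp (t.im * x.2 * Complex.I)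
          ∂(gaussianReal 0 (1 / 2)).prod (gaussianReal 0 (1 / 2)) := by
        rw [charFun_apply, stdComplexGaussian, integral_map_equiv]
        simp only [exp_inner]
    _ = charFun (gaussianReal 0 (1 / 2)) t.re * charFun (gaussianReal 0 (1 / 2)) t.im := by
        rw [charFun_apply_real, charFun_apply_real, integral_prod_mul
          (fun x : ℝ ↦ Complex.exp (t.re * x * Complex.I))
          (fun x : ℝ ↦ Complex.exp (t.im * x * Complex.I))]
    _ = Complex.exp (-Complex.normSq t / 4) := by
        rw [charFun_gaussianReal, charFun_gaussianReal, ← Complex.exp_add, Complex.normSq_apply]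
        push_cast
        ring_nf

lemma charFun_map_const_mul_conj (μ : Measure ℂ) (c t : ℂ) :
    charFun (μ.map fun z ↦ c * conj z) t = charFun μ (c * conj t) := by
  rw [charFun_apply, charFun_apply, integral_map (by fun_prop) (by fun_prop)]
  have inner_const_mul_conj (z : ℂ) : inner ℝ (c * conj z) t = inner ℝ z (c * conj t) := by
    simp only [Complex.inner, Complex.mul_re, Complex.mul_im, Complex.conj_re, Complex.conj_im,
      map_mul, Complex.conj_conj]
    ring
  simp only [inner_const_mul_conj]

variable {Ω κ : Type*} [MeasurableSpace Ω] {P : Measure Ω} [IsProbabilityMeasure P]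

lemma identDistrib_sum_mul_conj {Z : κ → Ω → ℂ} (hZ : iIndepFun Z P)
    (hlaw : ∀ j, HasLaw (Z j) stdComplexGaussian P) (s : Finset κ) (c : κ → ℂ) :
    IdentDistrib (fun ω ↦ ∑ j ∈ s, c j * conj (Z j ω))
      (fun w : ℂ ↦ √(∑ j ∈ s, Complex.normSq (c j)) • w) P stdComplexGaussian where
  aemeasurable_fst := by
    have h j := (hlaw j).aemeasurable
    fun_prop
  aemeasurable_snd := by fun_prop
  map_eq := by
    have hZm j : AEMeasurable (Z j) P := (hlaw j).aemeasurable
    have := Measure.isProbabilityMeasure_map (μ := P)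
      (f := fun ω ↦ ∑ j ∈ s, c j * conj (Z j ω)) (by fun_prop)
    have hindep : iIndepFun (fun j ω ↦ c j * conj (Z j ω)) P :=
      hZ.comp (fun j z ↦ c j * conj z) fun j ↦ by fun_prop
    have charFun_map j t : charFun (P.map fun ω ↦ c j * conj (Z j ω)) t =
        Complex.exp (-(Complex.normSq (c j) * Complex.normSq t) / 4) := by
      have hmap : P.map (fun ω ↦ c j * conj (Z j ω)) =
          stdComplexGaussian.map fun z ↦ c j * conj z := by
        rw [← (hlaw j).map_eq, AEMeasurable.map_map_of_aemeasurable (by fun_prop) (hZm j)]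
        rfl
      rw [hmap, charFun_map_const_mul_conj, charFun_stdComplexGaussian]
      simp
    refine Measure.ext_of_charFun (funext fun t ↦ ?_)
    rw [iIndepFun.charFun_map_fun_finsetSum_eq_prod (by fun_prop) (hindep.restrict s),
      charFun_map_smul, charFun_stdComplexGaussian, Finset.prod_apply]
    simp only [charFun_map, ← Complex.exp_sum, normSq_sqrt_smul (sum_normSq_nonneg s c)]
    push_cast
    rw [← Finset.sum_div, Finset.sum_neg_distrib, Finset.sum_mul]

lemma identDistrib_normSq_sum_mul_conj {Z : κ → Ω → ℂ} (hZ : iIndepFun Z P)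
    (hlaw : ∀ j, HasLaw (Z j) stdComplexGaussian P) (s : Finset κ) (c : κ → ℂ) :
    IdentDistrib (fun ω ↦ Complex.normSq (∑ j ∈ s, c j * conj (Z j ω)))
      (fun w ↦ (∑ j ∈ s, Complex.normSq (c j)) * Complex.normSq w) P stdComplexGaussian := by
  simpa only [Function.comp_def, normSq_sqrt_smul (sum_normSq_nonneg s c)] using
    (identDistrib_sum_mul_conj hZ hlaw s c).comp Complex.continuous_normSq.measurable

end StdComplexGaussian

section Independence

variable {Ω ι κ E : Type*} [MeasurableSpace Ω] [MeasurableSpace E] {P : Measure Ω}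
  [IsProbabilityMeasure P]

lemma iIndepFun_curry {X : ι × κ → Ω → E} (hX : iIndepFun X P) (hXm : ∀ p, Measurable (X p)) :
    iIndepFun (fun i ω j ↦ X (i, j) ω) P := by
  have _ p := Measure.isProbabilityMeasure_map (μ := P) (hXm p).aemeasurable
  have map_row i : P.map (fun ω j ↦ X (i, j) ω) =
      Measure.infinitePi fun j ↦ P.map (X (i, j)) :=
    (hX.precomp (Prod.mk_right_injective i)).map_fun_eq_infinitePi_map fun j ↦ hXm (i, j)
  rw [iIndepFun_iff_map_fun_eq_infinitePi_map (by fun_prop)]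
  simp only [map_row]
  rw [← Measure.infinitePi_map_curry fun i j ↦ P.map (X (i, j)),
    ← hX.map_fun_eq_infinitePi_map hXm, Measure.map_map (by fun_prop) (by fun_prop)]
  rfl

lemma IsStdComplexGaussianFamily.iIndepFun {g : ι → Ω → ℂ}
    (hg : IsStdComplexGaussianFamily P g) (hgm : ∀ i, Measurable (g i)) : iIndepFun g P :=
  (iIndepFun_curry hg.1 fun p ↦ by split_ifs <;> fun_prop).comp
    (fun _ x ↦ Complex.measurableEquivRealProd.symm (x true, x false)) fun _ ↦ by fun_prop

lemma IsStdComplexGaussianFamily.hasLaw {g : ι → Ω → ℂ}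
    (hg : IsStdComplexGaussianFamily P g) (hgm : ∀ i, Measurable (g i)) (i : ι) :
    HasLaw (g i) stdComplexGaussian P where
  aemeasurable := (hgm i).aemeasurable
  map_eq := by
    have hindep : IndepFun (fun ω ↦ (g i ω).re) (fun ω ↦ (g i ω).im) P := by
      simpa using hg.1.indepFun (i := (i, true)) (j := (i, false)) (by simp)
    have hre : P.map (fun ω ↦ (g i ω).re) = gaussianReal 0 (1 / 2) := by simpa using hg.2 (i, true)
    have him : P.map (fun ω ↦ (g i ω).im) = gaussianReal 0 (1 / 2) := by simpa using hg.2 (i, false)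
    have hmap := hindep.map_prod_eq_prod_map_map (by fun_prop) (by fun_prop)
    rw [hre, him] at hmap
    rw [stdComplexGaussian, ← hmap, Measure.map_map (by fun_prop) (by fun_prop)]
    rfl

lemma IsStdComplexGaussianFamily.iIndepFun_row {g : ι → κ → Ω → ℂ}
    (hg : IsStdComplexGaussianFamily P fun p : ι × κ ↦ g p.1 p.2)
    (hgm : ∀ i j, Measurable (g i j)) (i : ι) : ProbabilityTheory.iIndepFun (g i) P :=
  ProbabilityTheory.iIndepFun.precomp (f := fun p : ι × κ ↦ g p.1 p.2)
    (Prod.mk_right_injective i) (hg.iIndepFun fun p ↦ hgm p.1 p.2)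

lemma IsStdComplexGaussianFamily.hasLaw_row {g : ι → κ → Ω → ℂ}
    (hg : IsStdComplexGaussianFamily P fun p : ι × κ ↦ g p.1 p.2)
    (hgm : ∀ i j, Measurable (g i j)) (i : ι) (j : κ) : HasLaw (g i j) stdComplexGaussian P :=
  hg.hasLaw (fun p ↦ hgm p.1 p.2) (i, j)

end Independence

section ConditionalVariance

variable {Ω E F κ : Type*} [MeasurableSpace Ω] [MeasurableSpace E] [MeasurableSpace F]
  {P : Measure Ω} [IsProbabilityMeasure P]

lemma lintegral_comp_of_indepFun {A : Ω → E} {B : Ω → F} (hAB : IndepFun A B P)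
    (hA : Measurable A) (hB : Measurable B) {f : E → F → ℝ≥0∞}
    (hf : Measurable (Function.uncurry f)) :
    ∫⁻ ω, f (A ω) (B ω) ∂P = ∫⁻ ω, ∫⁻ ω', f (A ω) (B ω') ∂P ∂P := by
  have := Measure.isProbabilityMeasure_map (μ := P) hB.aemeasurable
  calc ∫⁻ ω, f (A ω) (B ω) ∂P
      = ∫⁻ x, Function.uncurry f x ∂(P.map A).prod (P.map B) := by
        rw [← hAB.map_prod_eq_prod_map_map hA.aemeasurable hB.aemeasurable,
          lintegral_map hf (hA.prodMk hB)]
        rfl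
    _ = ∫⁻ v, ∫⁻ w, f v w ∂(P.map B) ∂(P.map A) := lintegral_prod _ hf.aemeasurable
    _ = ∫⁻ ω, ∫⁻ w, f (A ω) w ∂(P.map B) ∂P := lintegral_map hf.lintegral_prod_right hA
    _ = _ := by
        congr! 2 with ω
        exact lintegral_map (hf.of_uncurry_left) hB

lemma eLpNorm_two_sq {μ : Measure Ω} (X : Ω → ℝ) :
    eLpNorm X 2 μ ^ 2 = ∫⁻ ω, ‖X ω‖ₑ ^ 2 ∂μ := by
  simpa only [NNReal.coe_ofNat, ENNReal.coe_ofNat, ENNReal.rpow_ofNat] using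
    eLpNorm_nnreal_pow_eq_lintegral (p := 2) (f := X) (μ := μ) two_ne_zero

lemma lintegral_sq_sum_sub_card_mul_le {X : κ → Ω → ℝ} {s : Finset κ}
    (hX : ∀ i ∈ s, MemLp (X i) 2 P)
    (hindep : Set.Pairwise (s : Set κ) fun i j ↦ X i ⟂ᵢ[P] X j) {m v : ℝ}
    (hm : ∀ i ∈ s, P[X i] = m) (hv : ∀ i ∈ s, Var[X i; P] ≤ v) :
    ∫⁻ ω, ‖∑ i ∈ s, X i ω - s.card * m‖ₑ ^ 2 ∂P ≤ ENNReal.ofReal (s.card * v) := by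
  have hsum : P[∑ i ∈ s, X i] = s.card * m := by
    simp only [Finset.sum_apply]
    rw [integral_finsetSum s fun i hi ↦ (hX i hi).integrable one_le_two, Finset.sum_congr rfl hm]
    simp
  calc ∫⁻ ω, ‖∑ i ∈ s, X i ω - s.card * m‖ₑ ^ 2 ∂P
      = eVar[∑ i ∈ s, X i; P] := by
        rw [evariance, hsum]
        simp only [Finset.sum_apply]
    _ = ENNReal.ofReal Var[∑ i ∈ s, X i; P] :=
        (memLp_finsetSum' s hX).ofReal_variance_eq.symm
    _ ≤ ENNReal.ofReal (s.card * v) := by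
        rw [IndepFun.variance_sum hX hindep, ← nsmul_eq_mul]
        exact ENNReal.ofReal_le_ofReal (Finset.sum_le_card_nsmul s _ v hv)

lemma eLpNorm_sum_sub_card_mul_le {h : κ → Ω → E} (hh : iIndepFun h P)
    (hhm : ∀ i, Measurable (h i))
    {s : Finset κ} {k : κ} (hk : k ∉ s) {f : E → E → ℝ} (hf : Measurable (Function.uncurry f))
    {m σ : E → ℝ} (hm : Measurable m)
    (hfL2 : ∀ v, ∀ i ∈ s, MemLp (fun ω ↦ f v (h i ω)) 2 P)
    (hfm : ∀ v, ∀ i ∈ s, ∫ ω, f v (h i ω) ∂P = m v)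
    (hfσ : ∀ v, ∀ i ∈ s, Var[fun ω ↦ f v (h i ω); P] ≤ σ v ^ 2) :
    eLpNorm (fun ω ↦ ∑ i ∈ s, f (h k ω) (h i ω) - s.card * m (h k ω)) 2 P ≤
      eLpNorm (fun ω ↦ √s.card * σ (h k ω)) 2 P := by
  have hindep : IndepFun (h k) (fun ω (i : s) ↦ h i ω) P :=
    (hh.indepFun_finset {k} s (by simpa) hhm).comp
      (φ := fun x : ({k} : Finset κ) → E ↦ x ⟨k, by simp⟩) (by fun_prop) measurable_id
  have conditional_le v : ∫⁻ ω, ‖∑ i ∈ s, f v (h i ω) - s.card * m v‖ₑ ^ 2 ∂P ≤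
      ENNReal.ofReal (s.card * σ v ^ 2) :=
    lintegral_sq_sum_sub_card_mul_le (hfL2 v)
      (fun i _ j _ hij ↦ (hh.indepFun hij).comp hf.of_uncurry_left hf.of_uncurry_left)
      (hfm v) (hfσ v)
  rw [← ENNReal.pow_le_pow_left_iff two_ne_zero, eLpNorm_two_sq, eLpNorm_two_sq]
  calc ∫⁻ ω, ‖∑ i ∈ s, f (h k ω) (h i ω) - s.card * m (h k ω)‖ₑ ^ 2 ∂P
      = ∫⁻ ω, ∫⁻ ω', ‖∑ i ∈ s, f (h k ω) (h i ω') - s.card * m (h k ω)‖ₑ ^ 2 ∂P ∂P := by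
        let F : E → (s → E) → ℝ≥0∞ := fun v w ↦ ‖∑ i : s, f v (w i) - s.card * m v‖ₑ ^ 2
        have hF : Measurable (Function.uncurry F) :=
          ((Finset.measurable_sum _ fun i _ ↦ hf.comp (measurable_fst.prodMk
            ((measurable_pi_apply i).comp measurable_snd))).sub
              ((hm.comp measurable_fst).const_mul _)).enorm.pow_const 2
        simp only [← Finset.sum_coe_sort s]
        exact lintegral_comp_of_indepFun hindep (hhm k) (by fun_prop) hF
    _ ≤ ∫⁻ ω, ENNReal.ofReal (s.card * σ (h k ω) ^ 2) ∂P :=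
        lintegral_mono fun ω ↦ conditional_le (h k ω)
    _ = ∫⁻ ω, ‖√s.card * σ (h k ω)‖ₑ ^ 2 ∂P := by
        congr! 2 with ω
        rw [← enorm_pow, Real.enorm_of_nonneg (sq_nonneg _), mul_pow,
          Real.sq_sqrt s.card.cast_nonneg]

end ConditionalVariance

lemma tendstoInLp_sum_range_div {Ω : Type*} [MeasurableSpace Ω] {P : Measure Ω}
    {p : ℝ≥0∞} (hp : 1 ≤ p) (hp' : p ≠ ∞) {X : ℕ → Ω → ℝ} (hX : MemLp (X 0) p P)
    (hindep : Pairwise fun i j ↦ X i ⟂ᵢ[P] X j) (hident : ∀ i, IdentDistrib (X i) (X 0) P P) :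
    TendstoInLp P p (fun n ω ↦ (∑ i ∈ Finset.range n, X i ω) / n) atTop P[X 0] where
  memLp n := by
    simp only [div_eq_inv_mul]
    exact (memLp_finsetSum _ fun i _ ↦ (hident i).memLp_iff.2 hX).const_mul _
  tendsto_eLpNorm := by
    simpa only [smul_eq_mul, inv_mul_eq_div] using strong_law_Lp hp hp' X hX hindep hident

/-- The squared Euclidean norm of the first `l` entries of `u`. -/
def truncSqNorm (l : ℕ) (u : ℕ → ℂ) : ℝ :=
  ∑ j ∈ Finset.range l, Complex.normSq (u j)

/-- The squared modulus of the Hermitian product of the first `l` entries of `u` and `v`: up to the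
power normalization, the interference caused to a user with channel `u` by the matched-filter
stream of a user with channel `v`. -/
noncomputable def truncSqInner (l : ℕ) (u v : ℕ → ℂ) : ℝ :=
  Complex.normSq (∑ j ∈ Finset.range l, u j * conj (v j))

@[fun_prop]
lemma measurable_truncSqNorm {α : Type*} [MeasurableSpace α] (l : ℕ) {u : α → ℕ → ℂ}
    (hu : Measurable u) : Measurable fun a ↦ truncSqNorm l (u a) := by
  have := Complex.continuous_normSq.measurable
  unfold truncSqNorm
  fun_prop

@[fun_prop]
lemma measurable_truncSqInner {α : Type*} [MeasurableSpace α] (l : ℕ) {u v : α → ℕ → ℂ}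
    (hu : Measurable u) (hv : Measurable v) : Measurable fun a ↦ truncSqInner l (u a) (v a) := by
  have := Complex.continuous_normSq.measurable
  unfold truncSqInner
  fun_prop

section GaussianChannel

variable {Ω κ : Type*} [MeasurableSpace Ω] {P : Measure Ω}

lemma tendstoInLp_truncSqNorm_div {Z : ℕ → Ω → ℂ} (hZ : iIndepFun Z P)
    (hlaw : ∀ j, HasLaw (Z j) stdComplexGaussian P) :
    TendstoInLp P 2 (fun l ω ↦ truncSqNorm l (fun j ↦ Z j ω) / l) atTop 1 := by
  have hident j : IdentDistrib (fun ω ↦ Complex.normSq (Z j ω)) Complex.normSq P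
      stdComplexGaussian :=
    ((hlaw j).identDistrib HasLaw.id).comp Complex.continuous_normSq.measurable
  have hmean : ∫ ω, Complex.normSq (Z 0 ω) ∂P = 1 :=
    (hident 0).integral_eq.trans integral_normSq_stdComplexGaussian
  rw [← hmean]
  exact tendstoInLp_sum_range_div one_le_two ofNat_ne_top
    ((hident 0).memLp_iff.2 (memLp_normSq_stdComplexGaussian 2))
    (fun i j hij ↦ (hZ.indepFun hij).comp Complex.continuous_normSq.measurable
      Complex.continuous_normSq.measurable)
    fun i ↦ (hident i).trans (hident 0).symm

lemma tendstoInLp_const_mul_truncSqNorm_sq {Z : ℕ → Ω → ℂ} (hZ : iIndepFun Z P)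
    (hlaw : ∀ j, HasLaw (Z j) stdComplexGaussian P) (a : ℝ) {Q : ℕ → ℕ} {b : ℝ}
    (hb : Tendsto (fun l ↦ (l / Q l : ℝ)) atTop (𝓝 b)) :
    TendstoInLp P 1 (fun l ω ↦ a / (Q l * l) * truncSqNorm l (Z · ω) ^ 2) atTop (a * b) := by
  have := hZ.isProbabilityMeasure
  have hS := tendstoInLp_truncSqNorm_div hZ hlaw
  have h := (hS.mul le_rfl hS).const_mul le_rfl (hb.const_mul a)
  simp only [mul_one] at h
  convert h using 3 with l ω
  rcases eq_or_ne l 0 with rfl | hl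
  · simp
  · field_simp

variable [IsProbabilityMeasure P] {g : κ → ℕ → Ω → ℂ}

lemma eLpNorm_sum_truncSqInner_sub_le (hgm : ∀ i j, Measurable (g i j))
    (hg : IsStdComplexGaussianFamily P fun p : κ × ℕ ↦ g p.1 p.2) {s : Finset κ} {k : κ}
    (hk : k ∉ s) (l : ℕ) :
    eLpNorm (fun ω ↦ ∑ i ∈ s, truncSqInner l (g k · ω) (g i · ω) -
        s.card * truncSqNorm l (g k · ω)) 2 P ≤
      eLpNorm (fun ω ↦ √s.card *
        (√Var[Complex.normSq; stdComplexGaussian] * truncSqNorm l (g k · ω))) 2 P := by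
  have hident (v : ℕ → ℂ) (i : κ) : IdentDistrib (fun ω ↦ truncSqInner l v (g i · ω))
      (fun w ↦ truncSqNorm l v * Complex.normSq w) P stdComplexGaussian :=
    identDistrib_normSq_sum_mul_conj (hg.iIndepFun_row hgm i) (hg.hasLaw_row hgm i) _ v
  refine eLpNorm_sum_sub_card_mul_le (h := fun i ω j ↦ g i j ω) (f := truncSqInner l)
    (m := truncSqNorm l) (σ := fun v ↦ √Var[Complex.normSq; stdComplexGaussian] * truncSqNorm l v)
    (iIndepFun_curry (hg.iIndepFun fun p ↦ hgm p.1 p.2) fun p ↦ hgm p.1 p.2) (by fun_prop) hk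
    (measurable_truncSqInner l measurable_fst measurable_snd)
    (measurable_truncSqNorm l measurable_id)
    (fun v i _ ↦ (hident v i).memLp_iff.2 ((memLp_normSq_stdComplexGaussian 2).const_mul _))
    (fun v i _ ↦ ?_) fun v i _ ↦ ?_
  · rw [(hident v i).integral_eq, integral_const_mul, integral_normSq_stdComplexGaussian, mul_one]
  · rw [(hident v i).variance_eq, variance_const_mul, mul_pow, Real.sq_sqrt (variance_nonneg _ _),
      mul_comm]

lemma tendstoInLp_sum_truncSqInner_sub (hgm : ∀ i j, Measurable (g i j))
    (hg : IsStdComplexGaussianFamily P fun p : κ × ℕ ↦ g p.1 p.2) {s : ℕ → Finset κ} {k : κ}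
    (hk : ∀ l, k ∉ s l) {Q : ℕ → ℕ}
    (hQ : Tendsto (fun l ↦ √(s l).card / Q l) atTop (𝓝 0)) :
    TendstoInLp P 2 (fun l ω ↦ (Q l * l : ℝ)⁻¹ *
      (∑ i ∈ s l, truncSqInner l (g k · ω) (g i · ω) - (s l).card * truncSqNorm l (g k · ω)))
      atTop 0 := by
  refine TendstoInLp.of_eLpNorm_le (X := fun l ω ↦ (Q l * l : ℝ)⁻¹ * (√(s l).card *
      (√Var[Complex.normSq; stdComplexGaussian] * truncSqNorm l (g k · ω)))) ?_
    (fun l ↦ by fun_prop)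
    fun l ↦ eLpNorm_const_mul_mono (eLpNorm_sum_truncSqInner_sub_le hgm hg (hk l) l) _
  have h := (tendstoInLp_truncSqNorm_div (hg.iIndepFun_row hgm k) (hg.hasLaw_row hgm k)).const_mul
    one_le_two (hQ.mul_const √Var[Complex.normSq; stdComplexGaussian])
  simp only [zero_mul] at h
  convert h using 3 with l ω
  ring

lemma tendstoInLp_const_mul_sum_truncSqInner (hgm : ∀ i j, Measurable (g i j))
    (hg : IsStdComplexGaussianFamily P fun p : κ × ℕ ↦ g p.1 p.2) {s : ℕ → Finset κ} {k : κ}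
    (hk : ∀ l, k ∉ s l) (a : ℝ) {Q : ℕ → ℕ} (hQ : Tendsto Q atTop atTop) {c : ℝ}
    (hc : Tendsto (fun l ↦ ((s l).card / Q l : ℝ)) atTop (𝓝 c)) :
    TendstoInLp P 2
      (fun l ω ↦ a / (Q l * l) * ∑ i ∈ s l, truncSqInner l (g k · ω) (g i · ω)) atTop
      (a * c) := by
  have hS := tendstoInLp_truncSqNorm_div (hg.iIndepFun_row hgm k) (hg.hasLaw_row hgm k)
  have hsqrt : Tendsto (fun l ↦ √(s l).card / Q l) atTop (𝓝 0) := by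
    have hQinv : Tendsto (fun l ↦ ((Q l : ℝ))⁻¹) atTop (𝓝 0) :=
      tendsto_inv_atTop_zero.comp (tendsto_natCast_atTop_atTop.comp hQ)
    have h := (hc.mul hQinv).sqrt
    simp only [mul_zero, Real.sqrt_zero] at h
    refine h.congr fun l ↦ ?_
    rw [← div_eq_mul_inv, div_div, Real.sqrt_div (Nat.cast_nonneg _),
      Real.sqrt_mul_self (Nat.cast_nonneg _)]
  have h := ((tendstoInLp_sum_truncSqInner_sub hgm hg hk hsqrt).add one_le_two
    (hS.const_mul one_le_two hc)).const_mul one_le_two (tendsto_const_nhds (x := a))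
  simp only [zero_add, mul_one] at h
  convert h using 3 with l ω
  ring

end GaussianChannel

lemma tendsto_nat_ceil_mul_atTop {a : ℝ} (ha : 0 < a) :
    Tendsto (fun l : ℕ ↦ ⌈a * l⌉₊) atTop atTop :=
  tendsto_nat_ceil_atTop.comp (tendsto_natCast_atTop_atTop.const_mul_atTop ha)

lemma tendsto_natCast_div_nat_ceil_mul {a : ℝ} (ha : 0 < a) :
    Tendsto (fun l : ℕ ↦ (l / ⌈a * l⌉₊ : ℝ)) atTop (𝓝 (1 / a)) := by
  have h := ((tendsto_nat_ceil_mul_div_atTop ha.le).comp tendsto_natCast_atTop_atTop).inv₀ ha.ne'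
  simpa only [one_div, Function.comp_def, inv_div] using h

lemma tendsto_card_filter_ne_div (k : ℕ) :
    Tendsto (fun n ↦ (((Finset.range n).filter (· ≠ k)).card / n : ℝ)) atTop (𝓝 1) := by
  have h : Tendsto (fun n : ℕ ↦ 1 - (n : ℝ)⁻¹) atTop (𝓝 1) := by
    simpa using tendsto_inv_atTop_nhds_zero_nat (𝕜 := ℝ).const_sub 1
  refine h.congr' ?_
  filter_upwards [eventually_gt_atTop k] with n hn
  have hn0 : (n : ℝ) ≠ 0 := Nat.cast_ne_zero.2 (by lia)
  rw [Finset.filter_ne', Finset.card_erase_of_mem (Finset.mem_range.2 hn), Finset.card_range,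
    Nat.cast_pred (by lia), sub_div, div_self hn0, one_div]

/-- Cacheless MF-based MISO BC. With `Q_L = ⌈c'L⌉`, rows `h_ϑ` of an i.i.d.
standard complex Gaussian `Q_L×L` matrix, `X_L = (P_t/(Q_L·L))‖h_k‖⁴` and
`Y_L = 1 + (P_t/(Q_L·L))·Σ_{ϑ≠k}|h_kᵀh_ϑ*|²`, it holds that
`E[ln(1+X_L/Y_L)] → ln(1 + (1/c')·P_t/(P_t+1))`; equivalently, the average sum-rate
`R̄^{MF}(1,c'L) = c'·L·E[ln(1+X_L/Y_L)]` satisfies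
`R̄^{MF}(1,c'L)/(c'L) → ln(1 + (1/c')·P_t/(P_t+1))`. -/
theorem stmt_1 {Ω : Type*} [MeasurableSpace Ω] (P : Measure Ω) [IsProbabilityMeasure P]
    (Pt : ℝ) (hPt : 0 < Pt) (c' : ℝ) (hc' : 0 < c')
    (g : ℕ → ℕ → Ω → ℂ) (hmeas : ∀ i j, Measurable (g i j))
    (hgauss : IsStdComplexGaussianFamily P (fun p : ℕ × ℕ => g p.1 p.2)) (k : ℕ) :
    let QL : ℕ → ℕ := fun l => Nat.ceil (c' * l)
    let X : ℕ → Ω → ℝ := fun l ω =>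
      Pt / (QL l * l) * (∑ j ∈ Finset.range l, Complex.normSq (g k j ω)) ^ 2
    let Y : ℕ → Ω → ℝ := fun l ω =>
      1 + Pt / (QL l * l) *
        ∑ ϑ ∈ (Finset.range (QL l)).filter (fun ϑ => ϑ ≠ k),
          Complex.normSq (∑ j ∈ Finset.range l, g k j ω * (starRingEnd ℂ) (g ϑ j ω))
    Filter.Tendsto (fun l : ℕ => ∫ ω, Real.log (1 + X l ω / Y l ω) ∂P)
      Filter.atTop (nhds (Real.log (1 + 1 / c' * (Pt / (Pt + 1))))) ∧
    Filter.Tendsto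
      (fun l : ℕ => (c' * l * ∫ ω, Real.log (1 + X l ω / Y l ω) ∂P) / (c' * l))
      Filter.atTop (nhds (Real.log (1 + 1 / c' * (Pt / (Pt + 1))))) := by
  intro QL X Y
  have hQ : Tendsto QL atTop atTop := tendsto_nat_ceil_mul_atTop hc'
  have hX : TendstoInLp P 1 X atTop (Pt * (1 / c')) :=
    tendstoInLp_const_mul_truncSqNorm_sq (hgauss.iIndepFun_row hmeas k)
      (hgauss.hasLaw_row hmeas k) Pt (tendsto_natCast_div_nat_ceil_mul hc')
  have hY : TendstoInLp P 1 Y atTop (1 + Pt * 1) :=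
    (TendstoInLp.of_tendsto tendsto_const_nhds).add le_rfl
      ((tendstoInLp_const_mul_sum_truncSqInner hmeas hgauss (by simp) Pt hQ
        ((tendsto_card_filter_ne_div k).comp hQ)).mono_exponent one_le_two)
  have hX0 l ω : 0 ≤ X l ω := by positivity
  have hY1 l ω : 1 ≤ Y l ω :=
    le_add_of_nonneg_right (mul_nonneg (by positivity) (sum_normSq_nonneg _ _))
  have main : Tendsto (fun l ↦ ∫ ω, Real.log (1 + X l ω / Y l ω) ∂P) atTop
      (𝓝 (Real.log (1 + 1 / c' * (Pt / (Pt + 1))))) := by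
    convert! (hX.log_one_add_div le_rfl hY hX0 hY1 (by positivity) (by linarith)
      ).tendsto_integral using 4
    ring
  refine ⟨main, main.congr' ?_⟩
  filter_upwards [eventually_gt_atTop 0] with l hl
  exact (mul_div_cancel_left₀ _ (by positivity)).symm
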